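/- Uniqueness of the satisfying child: let s be a nonempty string and let w_a ≠ w_b be two distinct non-atomic canonical tokens, both suffixes of s, with suc(w_a) = suc(w_b). Then w_a and w_b cannot both satisfy the Prefix Last-Token Condition with respect to s. -/

import Mathlib

/-!
Common BPE formalization preamble.

A token is a (nonempty) string over the alphabet `α`, modeled as `List α`.
A merge rule is a pair of tokens; a dictionary is an ordered list of rules
(earlier rules have strictly higher priority).
-/

namespace BPE

variable {α : Type*} [DecidableEq α]

/-- A token is a string over the alphabet (nonemptiness is imposed by hypotheses). -/
abbrev Token (α : Type*) := List α

/-- A merge rule is an ordered pair of tokens. -/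
abbrev Rule (α : Type*) := Token α × Token α

/-- A dictionary is an ordered list of merge rules; earlier = higher priority. -/
abbrev Dict (α : Type*) := List (Rule α)

/-- Apply a single merge rule to a token list, scanning left to right and replacing
each adjacent occurrence of `r.1` followed by `r.2` by the concatenated token,
resuming the scan after the newly formed token (no overlaps). -/
def applyRule (r : Rule α) : List (Token α) → List (Token α)
  | [] => []
  | [t] => [t]
  | t :: u :: rest =>
      if t = r.1 ∧ u = r.2 then (r.1 ++ r.2) :: applyRule r rest
      else t :: applyRule r (u :: rest)

/-- `φ₀(s)`: the list of single-character tokens of `s`. -/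
def phi0 (s : List α) : List (Token α) := s.map (fun c => [c])

/-- `φ_k(s)`: the token list after applying the first `k` rules of `D` to `s`. -/
def phiK (D : Dict α) (k : ℕ) (s : List α) : List (Token α) :=
  (D.take k).foldl (fun φ r => applyRule r φ) (phi0 s)

/-- The BPE tokenization `𝕋_D(s)`. -/
def tokenize (D : Dict α) (s : List α) : List (Token α) :=
  phiK D D.length s

/-- Detokenization `π`: concatenation of the tokens. -/
def detok (φ : List (Token α)) : List α := φ.flatten

/-- A dictionary is valid if all rule components are genuine (nonempty) tokens. -/
def ValidDict (D : Dict α) : Prop := ∀ r ∈ D, r.1 ≠ [] ∧ r.2 ≠ []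

/-- A token `t` is canonical if `𝕋_D(t) = [t]`. -/
def IsCanonical (D : Dict α) (t : Token α) : Prop := tokenize D t = [t]

/-- The last token `θ(s)`: last element of `𝕋_D(s)` (defaulting to `[]`). -/
def theta (D : Dict α) (s : List α) : Token α := (tokenize D s).getLastD []

/-- `j` (0-based) is the index of the canonical rule of `t`:
`φ_j(t)` has exactly two tokens and `φ_{j+1}(t) = [t]`. -/
def IsCanonicalRuleIdx (D : Dict α) (t : Token α) (j : ℕ) : Prop :=
  j < D.length ∧ (phiK D j t).length = 2 ∧ phiK D (j + 1) t = [t]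

open Classical in
/-- The (0-based) index of the canonical rule of `t` (junk value `0` if none exists). -/
noncomputable def canonIdx (D : Dict α) (t : Token α) : ℕ :=
  if h : ∃ j, IsCanonicalRuleIdx D t j then h.choose else 0

/-- Predecessor `pre(t)`: first token of the two-token stage `φ_{j-1}(t)`. -/
noncomputable def pre (D : Dict α) (t : Token α) : Token α :=
  (phiK D (canonIdx D t) t).headD []

/-- Successor `suc(t)`: second token of the two-token stage `φ_{j-1}(t)`. -/
noncomputable def suc (D : Dict α) (t : Token α) : Token α :=
  (phiK D (canonIdx D t) t).getLastD []

/-- `InPath D x a` means `a ∈ P(x)`: `a` is obtained from `x` by iterating `suc`,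
i.e. `a` lies on the ancestor path of `x` in the Successor Forest. -/
def InPath (D : Dict α) (x a : Token α) : Prop :=
  ∃ n : ℕ, (suc D)^[n] x = a

/-- `s` with the suffix `u` removed. -/
def dropSuffix (s u : List α) : List α := s.take (s.length - u.length)

/-- The Prefix Last-Token Condition of the canonical suffix token `t`
with respect to the string `s`. Atomic tokens satisfy it by definition;
a non-atomic token must satisfy Reachability and Priority dominance. -/
def PLTC (D : Dict α) (s t : Token α) : Prop :=
  t.length = 1 ∨
    (1 < t.length ∧
      InPath D (theta D (dropSuffix s (suc D t))) (pre D t) ∧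
      (theta D (dropSuffix s (suc D t)) ≠ pre D t →
        ∀ u : Token α, 1 < u.length → IsCanonical D u → suc D u = pre D t →
          InPath D (theta D (dropSuffix s (suc D t))) u →
          canonIdx D t < canonIdx D u))


theorem flatten_applyRule (r : Rule α) (L : List (Token α)) :
    (applyRule r L).flatten = L.flatten := by
  induction L using applyRule.induct r with
  | case1 => rfl
  | case2 t => rfl
  | case3 t u rest h ih =>
    rw [applyRule, if_pos h]
    simp [ih, h.1, h.2]
  | case4 t u rest h ih =>
    rw [applyRule, if_neg h]
    simp only [List.flatten_cons] at ih ⊢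
    rw [ih]

theorem applyRule_eq_nil (r : Rule α) (L : List (Token α)) (h : applyRule r L = []) : L = [] := by
  match L, h with
  | [], _ => rfl
  | [t], h => simp [applyRule] at h
  | t :: u :: rest, h =>
    rw [applyRule] at h
    split_ifs at h

theorem applyRule_eq_single (r : Rule α) (L : List (Token α)) (t : Token α)
    (h : applyRule r L = [t]) : L = [t] ∨ (L = [r.1, r.2] ∧ t = r.1 ++ r.2) := by
  match L, h with
  | [], h => simp [applyRule] at h
  | [t], h => left; simpa [applyRule] using h
  | x :: u :: rest, h =>
    rw [applyRule] at h
    split_ifs at h with hc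
    · right
      simp only [List.cons.injEq] at h
      have := applyRule_eq_nil r _ h.2
      simp [this, hc.1, hc.2, h.1]
    · simp only [List.cons.injEq] at h
      have := applyRule_eq_nil r _ h.2
      simp at this

theorem applyRule_split (r : Rule α) (L : List (Token α)) : ∀ M1 M2 : List (Token α),
    applyRule r L = M1 ++ M2 →
    ∃ L1 L2, L = L1 ++ L2 ∧ applyRule r L1 = M1 ∧ applyRule r L2 = M2 := by
  induction L using applyRule.induct r with
  | case1 =>
    intro M1 M2 h
    simp [applyRule] at h
    exact ⟨[], [], by simp, by simp [applyRule, h.1], by simp [applyRule, h.2]⟩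
  | case2 t =>
    intro M1 M2 h
    cases M1 with
    | nil => exact ⟨[], [t], rfl, rfl, by simpa using h⟩
    | cons m M1 =>
      simp [applyRule] at h
      obtain ⟨rfl, rfl, rfl⟩ := h
      exact ⟨[t], [], rfl, rfl, rfl⟩
  | case3 t u rest hc ih =>
    intro M1 M2 h
    cases M1 with
    | nil => exact ⟨[], t :: u :: rest, rfl, rfl, by simpa using h⟩
    | cons m M1 =>
      rw [applyRule, if_pos hc] at h
      simp only [List.cons_append, List.cons.injEq] at h
      obtain ⟨L1, L2, h1, h2, h3⟩ := ih _ _ h.2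
      refine ⟨t :: u :: L1, L2, by simp [h1], ?_, h3⟩
      rw [applyRule, if_pos hc, h2, h.1]
  | case4 t u rest hc ih =>
    intro M1 M2 h
    cases M1 with
    | nil => exact ⟨[], t :: u :: rest, rfl, rfl, by simpa using h⟩
    | cons m M1 =>
      rw [applyRule, if_neg hc] at h
      simp only [List.cons_append, List.cons.injEq] at h
      obtain ⟨L1, L2, h1, h2, h3⟩ := ih _ _ h.2
      refine ⟨t :: L1, L2, by simp [h1], ?_, h3⟩
      cases L1 with
      | nil => simp [applyRule] at h2 ⊢; simp [h.1, h2]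
      | cons v L1 =>
        simp only [List.cons_append, List.cons.injEq] at h1
        rw [applyRule, if_neg (by rw [← h1.1]; exact hc), h2, h.1]

theorem applyRule_no_end (r : Rule α) (h1 : r.1 ≠ []) (h2 : r.2 ≠ []) (M X : List (Token α)) :
    applyRule r M ≠ X ++ [r.1, r.2] := by
  intro h
  obtain ⟨L1, L2, -, -, e⟩ := applyRule_split r M _ _ h
  obtain ⟨L3, L4, rfl, e3, e4⟩ := applyRule_split r L2 [r.1] [r.2] e
  rcases applyRule_eq_single r _ _ e3 with rfl | ⟨-, e5⟩
  · rcases applyRule_eq_single r _ _ e4 with rfl | ⟨-, e5⟩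
    · simp [applyRule] at e
    · exact h1 (by simpa using e5)
  · exact h2 (by simpa using e5)

theorem phiK_succ_lt (D : Dict α) (k : ℕ) (s : List α) (h : k < D.length) :
    phiK D (k + 1) s = applyRule D[k] (phiK D k s) := by
  unfold phiK
  rw [List.take_add_one, List.getElem?_eq_getElem h]
  rw [Option.toList_some, List.foldl_append]
  rfl

theorem phiK_succ_ge (D : Dict α) (k : ℕ) (s : List α) (h : D.length ≤ k) :
    phiK D (k + 1) s = phiK D k s := by
  unfold phiK
  rw [List.take_of_length_le h, List.take_of_length_le (by omega)]

theorem flatten_phiK (D : Dict α) (k : ℕ) (s : List α) : (phiK D k s).flatten = s := by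
  induction k with
  | zero =>
    simp only [phiK, List.take_zero, List.foldl_nil, phi0]
    induction s with
    | nil => rfl
    | cons c s ih => simp [ih]
  | succ k ih =>
    rcases lt_or_ge k D.length with h | h
    · rw [phiK_succ_lt D k s h, flatten_applyRule, ih]
    · rw [phiK_succ_ge D k s h, ih]

theorem phiK_split (D : Dict α) (w : List α) (j : ℕ) : ∀ M1 M2 : List (Token α),
    phiK D j w = M1 ++ M2 →
    M1 = phiK D j M1.flatten ∧ M2 = phiK D j M2.flatten ∧
    ∀ i ≤ j, phiK D i w = phiK D i M1.flatten ++ phiK D i M2.flatten := by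
  induction j with
  | zero =>
    intro M1 M2 h
    have key : M1 = phiK D 0 M1.flatten ∧ M2 = phiK D 0 M2.flatten := by
      simp only [phiK, List.take_zero, List.foldl_nil, phi0] at h ⊢
      obtain ⟨l1, l2, rfl, rfl, rfl⟩ := List.map_eq_append_iff.1 h
      have := fun l => flatten_phiK D 0 (l : List α)
      simp only [phiK, List.take_zero, List.foldl_nil, phi0] at this
      rw [this, this]
      exact ⟨rfl, rfl⟩
    refine ⟨key.1, key.2, ?_⟩
    intro i hi
    obtain rfl : i = 0 := by omega
    rw [← key.1, ← key.2, h]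
  | succ j ih =>
    intro M1 M2 h
    rcases lt_or_ge j D.length with hj | hj
    · have h' := h
      rw [phiK_succ_lt D j w hj] at h'
      obtain ⟨L1, L2, e, rfl, rfl⟩ := applyRule_split _ _ _ _ h'
      obtain ⟨a1, a2, a3⟩ := ih _ _ e
      rw [flatten_applyRule, flatten_applyRule]
      have b1 : applyRule D[j] L1 = phiK D (j + 1) L1.flatten := by
        rw [phiK_succ_lt D j _ hj, ← a1]
      have b2 : applyRule D[j] L2 = phiK D (j + 1) L2.flatten := by
        rw [phiK_succ_lt D j _ hj, ← a2]
      refine ⟨b1, b2, ?_⟩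
      intro i hi
      rcases Nat.lt_or_ge i (j + 1) with h1 | h1
      · exact a3 i (by omega)
      · obtain rfl : i = j + 1 := by omega
        rw [h, b1, b2]
    · have h' := h
      rw [phiK_succ_ge D j w hj] at h'
      obtain ⟨a1, a2, a3⟩ := ih _ _ h'
      rw [phiK_succ_ge D j _ hj, phiK_succ_ge D j _ hj]
      refine ⟨a1, a2, ?_⟩
      intro i hi
      rcases Nat.lt_or_ge i (j + 1) with h1 | h1
      · exact a3 i (by omega)
      · obtain rfl : i = j + 1 := by omega
        rw [phiK_succ_ge D j _ hj, phiK_succ_ge D j _ hj, phiK_succ_ge D j _ hj]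
        exact a3 j le_rfl

theorem phiK_stable (D : Dict α) (t : Token α) (k m : ℕ) (hkm : k ≤ m)
    (h : phiK D k t = [t]) : phiK D m t = [t] := by
  induction m, hkm using Nat.le_induction with
  | base => exact h
  | succ m _ ih =>
    rcases lt_or_ge m D.length with hj | hj
    · rw [phiK_succ_lt D m _ hj, ih]; rfl
    · rw [phiK_succ_ge D m _ hj, ih]

theorem phiK_atomic (D : Dict α) (t : Token α) (h : t.length = 1) (k : ℕ) :
    phiK D k t = [t] := by
  apply phiK_stable D t 0 k (Nat.zero_le _)
  obtain ⟨c, rfl⟩ := List.length_eq_one_iff.1 h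
  rfl

theorem suc_atomic (D : Dict α) (t : Token α) (h : t.length = 1) : suc D t = t := by
  unfold suc
  rw [phiK_atomic D t h]; rfl

theorem canonical_pos (D : Dict α) (t : Token α) (h : IsCanonical D t) : 1 ≤ t.length := by
  by_contra hc
  have : t = [] := List.length_eq_zero_iff.1 (by omega)
  subst this
  have h0 : ∀ k, phiK D k ([] : List α) = [] := by
    intro k
    induction k with
    | zero => rfl
    | succ k ih =>
      rcases lt_or_ge k D.length with hj | hj
      · rw [phiK_succ_lt D k _ hj, ih]; rfl
      · rw [phiK_succ_ge D k _ hj, ih]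
  unfold IsCanonical tokenize at h
  rw [h0] at h
  simp at h

theorem suc_suffix (D : Dict α) (t : Token α) : suc D t <:+ t := by
  have key : ∀ L : List (Token α), L.getLastD [] <:+ L.flatten := by
    intro L
    rcases List.eq_nil_or_concat L with rfl | ⟨L', x, rfl⟩
    · simp
    · simp
  have := key (phiK D (canonIdx D t) t)
  rwa [flatten_phiK] at this

theorem iter_suffix (D : Dict α) (n : ℕ) (t : Token α) : (suc D)^[n] t <:+ t := by
  induction n with
  | zero => exact List.suffix_refl _
  | succ n ih =>
    rw [Function.iterate_succ_apply']
    exact (suc_suffix D _).trans ih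

theorem canonIdx_exists (D : Dict α) (t : Token α) (h : IsCanonical D t) (hl : 1 < t.length) :
    ∃ j, IsCanonicalRuleIdx D t j := by
  classical
  have hex : ∃ j, phiK D j t = [t] := ⟨D.length, h⟩
  have hspec := Nat.find_spec hex
  have hmin := fun m => Nat.find_min hex (m := m)
  cases hk : Nat.find hex with
  | zero =>
    rw [hk] at hspec
    have := congrArg List.length hspec
    simp [phiK, phi0] at this
    omega
  | succ k =>
    rw [hk] at hspec
    have hn := hmin k (by omega)
    rcases lt_or_ge k D.length with hj | hj
    · refine ⟨k, hj, ?_, hspec⟩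
      rw [phiK_succ_lt D k _ hj] at hspec
      rcases applyRule_eq_single _ _ _ hspec with e | ⟨e, -⟩
      · exact absurd e hn
      · rw [e]; rfl
    · rw [phiK_succ_ge D k _ hj] at hspec
      exact absurd hspec hn

theorem canon_spec (D : Dict α) (t : Token α) (h : IsCanonical D t) (hl : 1 < t.length) :
    phiK D (canonIdx D t) t = [pre D t, suc D t] ∧
    t = pre D t ++ suc D t ∧
    (∃ hk : canonIdx D t < D.length, D[canonIdx D t] = (pre D t, suc D t)) ∧
    phiK D (canonIdx D t) (pre D t) = [pre D t] ∧
    phiK D (canonIdx D t) (suc D t) = [suc D t] ∧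
    (∀ i ≤ canonIdx D t, phiK D i t = phiK D i (pre D t) ++ phiK D i (suc D t)) ∧
    IsCanonical D (pre D t) ∧ IsCanonical D (suc D t) := by
  have hex := canonIdx_exists D t h hl
  have hidx : IsCanonicalRuleIdx D t (canonIdx D t) := by
    unfold canonIdx
    rw [dif_pos hex]
    exact hex.choose_spec
  obtain ⟨hk, h2, h3⟩ := hidx
  have hpq : phiK D (canonIdx D t) t = [pre D t, suc D t] := by
    obtain ⟨p, q, e⟩ := List.length_eq_two.1 h2
    have hp : pre D t = p := by unfold pre; rw [e]; rfl
    have hq : suc D t = q := by unfold suc; rw [e]; rfl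
    rw [hp, hq, e]
  have hflat := flatten_phiK D (canonIdx D t) t
  rw [hpq] at hflat
  obtain ⟨s1, s2, s3⟩ := phiK_split D t (canonIdx D t) [pre D t] [suc D t] hpq
  simp only [List.flatten_cons, List.flatten_nil, List.append_nil] at s1 s2 s3 hflat
  refine ⟨hpq, hflat.symm, ⟨hk, ?_⟩, s1.symm, s2.symm, s3,
    phiK_stable D _ _ _ hk.le s1.symm, phiK_stable D _ _ _ hk.le s2.symm⟩
  rw [phiK_succ_lt D _ _ hk, hpq] at h3
  rcases applyRule_eq_single _ _ _ h3 with e | ⟨e, -⟩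
  · simp at e
  · simp only [List.cons.injEq, and_true] at e
    rw [e.1, e.2]

theorem canonIdx_lt (D : Dict α) (t : Token α) (h : IsCanonical D t) (hl : 1 < t.length)
    (m : ℕ) (hm : phiK D m t = [t]) : canonIdx D t < m := by
  by_contra hc
  have := phiK_stable D t m _ (not_lt.1 hc) hm
  rw [(canon_spec D t h hl).1] at this
  simp at this

theorem chain (D : Dict α) (n : ℕ) : ∀ t u : Token α, IsCanonical D t → (suc D)^[n] t = u →
    1 < u.length → canonIdx D u ≤ canonIdx D t ∧
      ∀ i ≤ canonIdx D u, ∃ L, phiK D i t = L ++ phiK D i u := by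
  induction n with
  | zero =>
    rintro t u ht rfl hu
    exact ⟨le_rfl, fun i _ => ⟨[], rfl⟩⟩
  | succ n ih =>
    intro t u ht e hu
    have hsuf : u <:+ suc D t := by
      rw [← e, Function.iterate_succ_apply]; exact iter_suffix D n _
    have hl1 : 1 < (suc D t).length := lt_of_lt_of_le hu hsuf.length_le
    have hl : 1 < t.length := lt_of_lt_of_le hl1 (suc_suffix D t).length_le
    obtain ⟨-, -, -, -, c5, c6, -, c8⟩ := canon_spec D t ht hl
    obtain ⟨i1, i2⟩ := ih (suc D t) u c8 (by rwa [Function.iterate_succ_apply] at e) hu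
    have hlt := canonIdx_lt D _ c8 hl1 _ c5
    refine ⟨by omega, ?_⟩
    intro i hi
    obtain ⟨L, hL⟩ := i2 i hi
    exact ⟨phiK D i (pre D t) ++ L, by rw [c6 i (by omega), hL, List.append_assoc]⟩

theorem iter_canonical (D : Dict α) (n : ℕ) (t : Token α) (h : IsCanonical D t) :
    IsCanonical D ((suc D)^[n] t) := by
  induction n with
  | zero => exact h
  | succ n ih =>
    rw [Function.iterate_succ_apply']
    rcases Nat.lt_or_ge 1 ((suc D)^[n] t).length with hl | hl
    · exact (canon_spec D _ ih hl).2.2.2.2.2.2.2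
    · have := canonical_pos D _ ih
      rw [suc_atomic D _ (by omega)]
      exact ih

/-- Core argument: the predecessor of `wb` is strictly further along the path. -/
theorem core (D : Dict α) (hD : ValidDict D) (x wa wb : Token α) (hne : wa ≠ wb)
    (ha : IsCanonical D wa) (hal : 1 < wa.length)
    (hb : IsCanonical D wb) (hbl : 1 < wb.length)
    (hsuc : suc D wa = suc D wb) (k m : ℕ) (hkm : k ≤ m)
    (hk : (suc D)^[k] x = pre D wa) (hm : (suc D)^[m] x = pre D wb)
    (hdom : x ≠ pre D wb → ∀ u : Token α, 1 < u.length → IsCanonical D u →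
      suc D u = pre D wb → InPath D x u → canonIdx D wb < canonIdx D u) : False := by
  classical
  obtain ⟨-, a2, -, a4, -, a6, a7, -⟩ := canon_spec D wa ha hal
  obtain ⟨-, b2, ⟨bk, bD⟩, b4, b5, -, -, -⟩ := canon_spec D wb hb hbl
  have hab : pre D wa ≠ pre D wb := by
    intro e
    apply hne
    rw [a2, b2, e, hsuc]
  have hit : (suc D)^[m - k] (pre D wa) = pre D wb := by
    rw [← hk, ← Function.iterate_add_apply, Nat.sub_add_cancel hkm, hm]
  have hx : x ≠ pre D wb := by
    intro e
    have s1 : pre D wa <:+ pre D wb := by rw [← hk, ← e]; exact iter_suffix D k x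
    have s2 : pre D wb <:+ pre D wa := by rw [← hit]; exact iter_suffix D _ _
    exact hab (s1.eq_of_length (le_antisymm s1.length_le s2.length_le))
  have hex : ∃ n, (suc D)^[n] (pre D wa) = pre D wb := ⟨_, hit⟩
  have hspec := Nat.find_spec hex
  have hmin := fun m => Nat.find_min hex (m := m)
  cases hn : Nat.find hex with
  | zero => rw [hn] at hspec; exact hab hspec
  | succ n =>
    rw [hn, Function.iterate_succ_apply'] at hspec
    have hub := hmin n (by omega)
    obtain ⟨u, hu⟩ : ∃ u, u = (suc D)^[n] (pre D wa) := ⟨_, rfl⟩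
    rw [← hu] at hspec hub
    have hcu : IsCanonical D u := hu ▸ iter_canonical D n _ a7
    have hlu : 1 < u.length := by
      by_contra hc
      have := canonical_pos D u hcu
      exact hub (by rw [← hspec, suc_atomic D u (by omega)])
    have hpath : InPath D x u := ⟨n + k, by rw [Function.iterate_add_apply, hk, hu]⟩
    have hlt := hdom hx u hlu hcu hspec hpath
    obtain ⟨c1, c2⟩ := chain D n _ u a7 hu.symm hlu
    obtain ⟨-, -, -, -, -, u6, -, -⟩ := canon_spec D u hcu hlu
    have hla : 1 < (pre D wa).length :=
      lt_of_lt_of_le hlu (by rw [hu]; exact (iter_suffix D n _).length_le)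
    have hKa := canonIdx_lt D _ a7 hla _ a4
    obtain ⟨L, hL⟩ := c2 (canonIdx D wb + 1) hlt
    have e := a6 (canonIdx D wb + 1) (by omega)
    rw [hL, u6 _ hlt, hspec, hsuc, phiK_stable D _ _ _ (Nat.le_succ _) b4,
      phiK_stable D _ _ _ (Nat.le_succ _) b5, phiK_succ_lt D _ _ bk, bD] at e
    have hv := hD _ (List.getElem_mem bk)
    rw [bD] at hv
    refine applyRule_no_end (pre D wb, suc D wb) hv.1 hv.2
      (phiK D (canonIdx D wb) wa)
      (L ++ phiK D (canonIdx D wb + 1) (pre D u)) ?_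
    rw [e]
    simp

/-- **Uniqueness of the satisfying child.** Two distinct non-atomic canonical suffix
tokens of `s` with the same successor cannot both satisfy the Prefix Last-Token
Condition with respect to `s`. -/
theorem satisfying_child_unique [Fintype α] (D : Dict α) (hD : ValidDict D)
    (s : List α) (hs : s ≠ [])
    (wa wb : Token α) (hne : wa ≠ wb)
    (ha : IsCanonical D wa) (hal : 1 < wa.length) (has : wa <:+ s)
    (hb : IsCanonical D wb) (hbl : 1 < wb.length) (hbs : wb <:+ s)
    (hsuc : suc D wa = suc D wb) :
    ¬ (PLTC D s wa ∧ PLTC D s wb) := by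
  rintro ⟨h1, h2⟩
  rcases h1 with h1 | ⟨-, ⟨k, hk⟩, hda⟩
  · omega
  rcases h2 with h2 | ⟨-, ⟨m, hm⟩, hdb⟩
  · omega
  rw [← hsuc] at hm hdb
  rcases le_total k m with hkm | hkm
  · exact core D hD _ wa wb hne ha hal hb hbl hsuc k m hkm hk hm hdb
  · exact core D hD _ wb wa hne.symm hb hbl ha hal hsuc.symm m k hkm hm hk hda

end BPE
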